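/- Let d ≥ 1, let H : ℝ^d → ℝ be smooth, and let Q : ℝ^d → (d×d real matrices) be smooth with Q(z) skew-symmetric for every z. Define the vector field v : ℝ^d → ℝ^d by v_i(z) = -∑_{j=1}^d Q_{ij}(z) ∂H/∂z_j(z) + ∑_{j=1}^d ∂Q_{ij}/∂z_j(z). Then the density π(z) = e^{-H(z)} satisfies the stationary continuity (Liouville) equation for the flow of v: for every z ∈ ℝ^d, ∑_{i=1}^d ∂/∂z_i [ e^{-H(z)} v_i(z) ] = 0. -/

import Mathlib

open scoped BigOperators
open Matrix

/-- Classical partial derivative in the `i`-th coordinate direction. -/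
noncomputable def pd {ι : Type*} [Fintype ι] [DecidableEq ι]
    (i : ι) (f : (ι → ℝ) → ℝ) (z : ι → ℝ) : ℝ :=
  fderiv ℝ f z (Pi.single i 1)

/-!
The weighted field is itself a divergence: by the product rule `e^{-H} v_i = ∑_j ∂_j (e^{-H} Q_ij)`,
so its divergence is `∑_ij ∂_i ∂_j A_ij` with `A = e^{-H} Q`. Second partial derivatives commute,
so this sum is unchanged when `A` is transposed, whereas skew-symmetry makes it change sign.
-/

open Filter Topology

theorem differentiableAt_fderiv_of_contDiffAt_two {𝕜 E F : Type*} [NontriviallyNormedField 𝕜]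
    [NormedAddCommGroup E] [NormedSpace 𝕜 E] [NormedAddCommGroup F] [NormedSpace 𝕜 F]
    {f : E → F} {x : E} (hf : ContDiffAt 𝕜 2 f x) : DifferentiableAt 𝕜 (fderiv 𝕜 f) x :=
  (hf.fderiv_right (m := 1) (by norm_num)).differentiableAt one_ne_zero

section

variable {ι : Type*} [Fintype ι] [DecidableEq ι] {f g H : (ι → ℝ) → ℝ} {F G : (ι → ℝ) → ι → ℝ}
  {A B Q : (ι → ℝ) → Matrix ι ι ℝ} {z : ι → ℝ}

theorem pd_congr (h : f =ᶠ[𝓝 z] g) (i : ι) : pd i f z = pd i g z := by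
  rw [pd, pd, h.fderiv_eq]

theorem pd_neg (i : ι) (f : (ι → ℝ) → ℝ) (z : ι → ℝ) : pd i (fun w => -f w) z = -pd i f z := by
  simp [pd]

theorem pd_sum {κ : Type*} {s : Finset κ} {f : κ → (ι → ℝ) → ℝ}
    (hf : ∀ k ∈ s, DifferentiableAt ℝ (f k) z) (i : ι) :
    pd i (fun w => ∑ k ∈ s, f k w) z = ∑ k ∈ s, pd i (f k) z := by
  simp [pd, fderiv_fun_sum hf]

theorem pd_mul (hf : DifferentiableAt ℝ f z) (hg : DifferentiableAt ℝ g z) (i : ι) :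
    pd i (fun w => f w * g w) z = f z * pd i g z + g z * pd i f z := by
  simp [pd, fderiv_fun_mul hf hg]

theorem pd_exp_neg (hH : DifferentiableAt ℝ H z) (i : ι) :
    pd i (fun w => Real.exp (-H w)) z = -(Real.exp (-H z) * pd i H z) := by
  simp [pd, fderiv_exp hH.fun_neg]

theorem differentiableAt_pd (hf : ContDiffAt ℝ 2 f z) (i : ι) : DifferentiableAt ℝ (pd i f) z :=
  (differentiableAt_fderiv_of_contDiffAt_two hf).clm_apply (differentiableAt_const _)

theorem pd_pd_eq_fderiv_fderiv (hf : ContDiffAt ℝ 2 f z) (i j : ι) :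
    pd i (pd j f) z = fderiv ℝ (fderiv ℝ f) z (Pi.single i 1) (Pi.single j 1) := by
  change fderiv ℝ (fun w => fderiv ℝ f w (Pi.single j 1)) z (Pi.single i 1) = _
  simp [fderiv_clm_apply (differentiableAt_fderiv_of_contDiffAt_two hf)
    (differentiableAt_const (Pi.single j 1))]

theorem pd_comm (hf : ContDiffAt ℝ 2 f z) (i j : ι) : pd i (pd j f) z = pd j (pd i f) z := by
  rw [pd_pd_eq_fderiv_fderiv hf, pd_pd_eq_fderiv_fderiv hf]
  exact hf.isSymmSndFDerivAt (by simp) _ _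

/-- The divergence `∑ i, ∂F_i/∂z_i` of a vector field. -/
noncomputable def divergence (F : (ι → ℝ) → ι → ℝ) (z : ι → ℝ) : ℝ :=
  ∑ i, pd i (fun w => F w i) z

/-- The row-wise divergence of a matrix field: the vector field with components
`∑ j, ∂A_ij/∂z_j`. -/
noncomputable def rowDivergence (A : (ι → ℝ) → Matrix ι ι ℝ) (z : ι → ℝ) (i : ι) : ℝ :=
  ∑ j, pd j (fun w => A w i j) z

theorem divergence_congr (h : F =ᶠ[𝓝 z] G) : divergence F z = divergence G z :=
  Finset.sum_congr rfl fun i _ => pd_congr (h.mono fun _ hw => congrFun hw i) i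

theorem rowDivergence_congr (h : A =ᶠ[𝓝 z] B) : rowDivergence A z = rowDivergence B z :=
  funext fun i => Finset.sum_congr rfl fun j _ =>
    pd_congr (h.mono fun _ hw => congrFun (congrFun hw i) j) j

theorem divergence_rowDivergence_congr (h : A =ᶠ[𝓝 z] B) :
    divergence (rowDivergence A) z = divergence (rowDivergence B) z :=
  divergence_congr (h.eventuallyEq_nhds.mono fun _ => rowDivergence_congr)

theorem divergence_neg (F : (ι → ℝ) → ι → ℝ) (z : ι → ℝ) :
    divergence (fun w => -F w) z = -divergence F z := by
  simp [divergence, pd_neg]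

theorem rowDivergence_neg (A : (ι → ℝ) → Matrix ι ι ℝ) (z : ι → ℝ) :
    rowDivergence (fun w => -A w) z = -rowDivergence A z := by
  ext i
  simp [rowDivergence, pd_neg]

theorem divergence_rowDivergence_eq_sum (hA : ∀ i j, ContDiffAt ℝ 2 (fun w => A w i j) z) :
    divergence (rowDivergence A) z = ∑ i, ∑ j, pd i (pd j fun w => A w i j) z :=
  Finset.sum_congr rfl fun i _ => pd_sum (fun j _ => differentiableAt_pd (hA i j) j) i

theorem divergence_rowDivergence_transpose (hA : ∀ i j, ContDiffAt ℝ 2 (fun w => A w i j) z) :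
    divergence (rowDivergence fun w => (A w)ᵀ) z = divergence (rowDivergence A) z :=
  calc divergence (rowDivergence fun w => (A w)ᵀ) z
    _ = ∑ i, ∑ j, pd i (pd j fun w => A w j i) z :=
      divergence_rowDivergence_eq_sum fun i j => hA j i
    _ = ∑ i, ∑ j, pd j (pd i fun w => A w i j) z := Finset.sum_comm
    _ = ∑ i, ∑ j, pd i (pd j fun w => A w i j) z :=
      Finset.sum_congr rfl fun i _ => Finset.sum_congr rfl fun j _ => pd_comm (hA i j) j i
    _ = divergence (rowDivergence A) z := (divergence_rowDivergence_eq_sum hA).symm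

theorem divergence_rowDivergence_eq_zero_of_skew
    (hA : ∀ i j, ContDiffAt ℝ 2 (fun w => A w i j) z) (hskew : ∀ᶠ w in 𝓝 z, (A w)ᵀ = -A w) :
    divergence (rowDivergence A) z = 0 :=
  self_eq_neg.mp <|
    calc divergence (rowDivergence A) z
      _ = divergence (rowDivergence fun w => (A w)ᵀ) z :=
        (divergence_rowDivergence_transpose hA).symm
      _ = divergence (rowDivergence fun w => -A w) z := divergence_rowDivergence_congr hskew
      _ = divergence (fun w => -rowDivergence A w) z := by
        rw [funext (rowDivergence_neg A)]
      _ = -divergence (rowDivergence A) z := divergence_neg _ z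

theorem rowDivergence_smul (hf : DifferentiableAt ℝ f z) {i : ι}
    (hA : ∀ j, DifferentiableAt ℝ (fun w => A w i j) z) :
    rowDivergence (fun w => f w • A w) z i =
      f z * rowDivergence A z i + ∑ j, A z i j * pd j f z := by
  simp only [rowDivergence, Matrix.smul_apply, smul_eq_mul, pd_mul hf (hA _),
    Finset.sum_add_distrib, Finset.mul_sum]

theorem rowDivergence_exp_neg_smul (hH : DifferentiableAt ℝ H z) {i : ι}
    (hQ : ∀ j, DifferentiableAt ℝ (fun w => Q w i j) z) :
    rowDivergence (fun w => Real.exp (-H w) • Q w) z i =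
      Real.exp (-H z) * (-∑ j, Q z i j * pd j H z + rowDivergence Q z i) := by
  rw [rowDivergence_smul hH.fun_neg.exp hQ]
  simp only [pd_exp_neg hH, mul_add, mul_neg, Finset.mul_sum, Finset.sum_neg_distrib,
    mul_left_comm, add_comm]

theorem liouville_irreversible_flow_general {v : (ι → ℝ) → ι → ℝ}
    (hH : ContDiffAt ℝ 2 H z) (hQ : ∀ i j, ContDiffAt ℝ 2 (fun w => Q w i j) z)
    (hQskew : ∀ᶠ w in 𝓝 z, (Q w)ᵀ = -Q w)
    (hv : ∀ᶠ w in 𝓝 z, ∀ i, v w i =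
      -∑ j, Q w i j * pd j H w + ∑ j, pd j (fun u => Q u i j) w) :
    ∑ i, pd i (fun w => Real.exp (-H w) * v w i) z = 0 := by
  have hH_near : ∀ᶠ w in 𝓝 z, DifferentiableAt ℝ H w :=
    (hH.eventually (by simp)).mono fun _ h => h.differentiableAt two_ne_zero
  have hQ_near : ∀ᶠ w in 𝓝 z, ∀ i j, DifferentiableAt ℝ (fun u => Q u i j) w :=
    eventually_all.2 fun i => eventually_all.2 fun j =>
      ((hQ i j).eventually (by simp)).mono fun _ h => h.differentiableAt two_ne_zero
  have hfield : (fun w i => Real.exp (-H w) * v w i) =ᶠ[𝓝 z]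
      rowDivergence fun w => Real.exp (-H w) • Q w := by
    filter_upwards [hH_near, hQ_near, hv] with w hHw hQw hvw
    ext i
    rw [rowDivergence_exp_neg_smul hHw (hQw i), hvw i, rowDivergence]
  have hskew : ∀ᶠ w in 𝓝 z, (Real.exp (-H w) • Q w)ᵀ = -(Real.exp (-H w) • Q w) :=
    hQskew.mono fun w hw => by rw [transpose_smul, hw, smul_neg]
  exact (divergence_congr hfield).trans <|
    divergence_rowDivergence_eq_zero_of_skew (fun i j => hH.neg.exp.mul (hQ i j)) hskew

end

/-- The density `π = e^{-H}` satisfies the stationary continuity (Liouville)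
equation for the irreversible vector field determined by a smooth skew-symmetric
matrix field `Q`. -/
theorem liouville_irreversible_flow {d : ℕ} (hd : 1 ≤ d)
    (H : (Fin d → ℝ) → ℝ) (hH : ContDiff ℝ (⊤ : ℕ∞) H)
    (Q : (Fin d → ℝ) → Matrix (Fin d) (Fin d) ℝ)
    (hQ : ∀ i j, ContDiff ℝ (⊤ : ℕ∞) (fun z => Q z i j))
    (hQskew : ∀ z, (Q z)ᵀ = -Q z)
    (v : (Fin d → ℝ) → Fin d → ℝ)
    (hv : ∀ z i, v z i =
      -∑ j, Q z i j * pd j H z + ∑ j, pd j (fun w => Q w i j) z)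
    (z : Fin d → ℝ) :
    ∑ i, pd i (fun w => Real.exp (-H w) * v w i) z = 0 := by
  exact liouville_irreversible_flow_general (contDiff_infty.1 hH 2).contDiffAt
    (fun i j => (contDiff_infty.1 (hQ i j) 2).contDiffAt) (.of_forall hQskew) (.of_forall hv)
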